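/- Let f ∈ ℂ[x,y,z,w] be a reduced homogeneous polynomial of degree d defining a free surface D: f = 0 in P³ with exponents d1 ≤ d2 ≤ d3, and assume D is not a cone (i.e., the minimal degree of a nonzero Jacobian syzygy is positive). Then d1 + d2 + d3 = d − 1, and for all sufficiently large k one has m(f)_k = a·k + b, where a = s1² − s2 and b = 2a − s1³ + (3/2)·s1·s2 − (1/2)·s3, with s1 = d1 + d2 + d3, s2 = d1d2 + d1d3 + d2d3, and s3 = d1d2d3. -/

import Mathlib

open MvPolynomial Matrix

noncomputable section

/-- The polynomial ring `S = ℂ[x,y,z,w]`. -/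
abbrev S4 : Type := MvPolynomial (Fin 4) ℂ

/-- The `S`-linear map sending `ρ = (α,β,γ,δ)` to `α fₓ + β f_y + γ f_z + δ f_w`. -/
def jacPair (f : S4) : (Fin 4 → S4) →ₗ[S4] S4 where
  toFun ρ := ∑ i, ρ i * pderiv i f
  map_add' a b := by simp [add_mul, Finset.sum_add_distrib]
  map_smul' c a := by simp [Finset.mul_sum, mul_assoc]

/-- `AR(f)`: the `S`-module of all Jacobian syzygies of `f`. -/
def AR4 (f : S4) : Submodule S4 (Fin 4 → S4) := LinearMap.ker (jacPair f)

/-- A vector of polynomials is homogeneous of degree `q` if each component is. -/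
def VecHomog (ρ : Fin 4 → S4) (q : ℕ) : Prop := ∀ i, (ρ i).IsHomogeneous q

/-- `AR(f)_k`, the degree-`k` homogeneous part of `AR(f)`, as a `ℂ`-subspace. -/
def ARgr (f : S4) (k : ℕ) : Submodule ℂ (Fin 4 → S4) :=
  (AR4 f).restrictScalars ℂ ⊓ Submodule.pi Set.univ (fun _ => homogeneousSubmodule (Fin 4) ℂ k)

/-- `ar(f)_k = dim_ℂ AR(f)_k`. -/
def arDim (f : S4) (k : ℕ) : ℕ := Module.finrank ℂ (ARgr f k)

/-- `ar(f)_q` for an integer index, with the convention that it vanishes for `q < 0`. -/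
def arZ (f : S4) (q : ℤ) : ℕ := if 0 ≤ q then arDim f q.toNat else 0

/-- The Jacobian ideal of `f`. -/
def JacIdeal (f : S4) : Ideal S4 := Ideal.span (Set.range fun i : Fin 4 => pderiv i f)

/-- `m(f)_k = dim_ℂ M(f)_k`, the dimension of the degree-`k` part of the Milnor algebra. -/
def milnor4 (f : S4) (k : ℕ) : ℕ :=
  Module.finrank ℂ ((homogeneousSubmodule (Fin 4) ℂ k).map
    (Submodule.mkQ ((JacIdeal f).restrictScalars ℂ)))

/-- `binom(m,3)` with the convention that it is `0` for `m < 3`. -/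
def binom3 (m : ℤ) : ℕ := m.toNat.choose 3

/-- All four `3×3` minors of the `3×4` matrix with rows `ρ1, ρ2, ρ` vanish. -/
def MinorsVanish3 (ρ1 ρ2 ρ : Fin 4 → S4) : Prop :=
  ∀ j : Fin 4,
    (Matrix.of fun i k => ![ρ1, ρ2, ρ] i (j.succAbove k) : Matrix (Fin 3) (Fin 3) S4).det = 0

/-- `D : f = 0` is tame with respect to `ρ1, ρ2`: every homogeneous syzygy `ρ` for which all
`3×3` minors of the matrix with rows `ρ1, ρ2, ρ` vanish lies in `S·ρ1 + S·ρ2`. -/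
def TamePair (f : S4) (ρ1 ρ2 : Fin 4 → S4) : Prop :=
  ∀ ρ ∈ AR4 f, ∀ q : ℕ, VecHomog ρ q → MinorsVanish3 ρ1 ρ2 ρ →
    ∃ a b : S4, ρ = a • ρ1 + b • ρ2

/-- `ρ1` is a nonzero homogeneous syzygy of minimal degree `e1`, and `ρ2` is a homogeneous
syzygy of minimal degree `e2 ≥ e1` among the homogeneous syzygies not in `S·ρ1`. -/
def MinimalPair (f : S4) (ρ1 ρ2 : Fin 4 → S4) (e1 e2 : ℕ) : Prop :=
  ρ1 ∈ AR4 f ∧ ρ1 ≠ 0 ∧ VecHomog ρ1 e1 ∧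
  (∀ ρ ∈ AR4 f, ∀ q : ℕ, ρ ≠ 0 → VecHomog ρ q → e1 ≤ q) ∧
  ρ2 ∈ AR4 f ∧ VecHomog ρ2 e2 ∧ e1 ≤ e2 ∧ (∀ a : S4, ρ2 ≠ a • ρ1) ∧
  (∀ ρ ∈ AR4 f, ∀ q : ℕ, VecHomog ρ q → (∀ a : S4, ρ ≠ a • ρ1) → e2 ≤ q)

/-- `D : f = 0` is a free surface with exponents `d1 ≤ d2 ≤ d3`: `AR(f)` is a free graded
`S`-module with a homogeneous basis of degrees `d1, d2, d3`. -/
def IsFreeWith (f : S4) (d1 d2 d3 : ℕ) : Prop :=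
  d1 ≤ d2 ∧ d2 ≤ d3 ∧
  ∃ ρ1 ρ2 ρ3 : Fin 4 → S4,
    ρ1 ∈ AR4 f ∧ ρ2 ∈ AR4 f ∧ ρ3 ∈ AR4 f ∧
    VecHomog ρ1 d1 ∧ VecHomog ρ2 d2 ∧ VecHomog ρ3 d3 ∧
    (∀ ρ ∈ AR4 f, ∃ a b c : S4, ρ = a • ρ1 + b • ρ2 + c • ρ3) ∧
    (∀ a b c : S4, a • ρ1 + b • ρ2 + c • ρ3 = 0 → a = 0 ∧ b = 0 ∧ c = 0)

/-- `D : f = 0` is a nearly free surface with exponents `d1 ≤ d2 ≤ d3` (`d4 = d3`):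
`AR(f)` is generated by four homogeneous syzygies of degrees `d1, d2, d3, d3`,
with `d3 = d - (d1 + d2)`, whose module of relations is generated by a single relation
`a₁ρ₁ + a₂ρ₂ + a₃ρ₃ + a₄ρ₄ = 0` with `a₁, a₂, a₃, a₄` homogeneous of degrees
`d3-d1+1, d3-d2+1, 1, 1`. -/
def IsNearlyFreeWith (f : S4) (d d1 d2 d3 : ℕ) : Prop :=
  d1 ≤ d2 ∧ d2 ≤ d3 ∧ d1 + d2 + d3 = d ∧
  ∃ (ρ : Fin 4 → Fin 4 → S4) (a : Fin 4 → S4),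
    (∀ i, ρ i ∈ AR4 f) ∧
    VecHomog (ρ 0) d1 ∧ VecHomog (ρ 1) d2 ∧ VecHomog (ρ 2) d3 ∧ VecHomog (ρ 3) d3 ∧
    (∀ σ ∈ AR4 f, ∃ b : Fin 4 → S4, σ = ∑ i, b i • ρ i) ∧
    (a 0).IsHomogeneous (d3 - d1 + 1) ∧ (a 1).IsHomogeneous (d3 - d2 + 1) ∧
    (a 2).IsHomogeneous 1 ∧ (a 3).IsHomogeneous 1 ∧
    a ≠ 0 ∧ (∑ i, a i • ρ i) = 0 ∧
    (∀ b : Fin 4 → S4, (∑ i, b i • ρ i) = 0 → ∃ c : S4, b = c • a)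

/-- `D : f = 0` is tame: it is tame with respect to some pair `ρ1, ρ2` chosen as in the paper. -/
def IsTame (f : S4) : Prop :=
  ∃ (ρ1 ρ2 : Fin 4 → S4) (e1 e2 : ℕ), MinimalPair f ρ1 ρ2 e1 e2 ∧ TamePair f ρ1 ρ2

/-- The `4×4` matrix with rows the Euler vector field `(x,y,z,w)` and `ρ1, ρ2, ρ`. -/
def EMat (ρ1 ρ2 ρ : Fin 4 → S4) : Matrix (Fin 4) (Fin 4) S4 :=
  Matrix.of ![fun i => X i, ρ1, ρ2, ρ]

/-- The leading coefficient `a = s₁² - s₂` of the Hilbert polynomial of a free surface. -/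
def freeHilbA (x y z : ℚ) : ℚ := (x + y + z) ^ 2 - (x * y + x * z + y * z)

/-- The constant coefficient `b = 2a - s₁³ + (3/2)s₁s₂ - (1/2)s₃` of the Hilbert polynomial
of a free surface. -/
def freeHilbB (x y z : ℚ) : ℚ :=
  2 * freeHilbA x y z - (x + y + z) ^ 3 +
    (3 / 2) * (x + y + z) * (x * y + x * z + y * z) - (1 / 2) * (x * y * z)

/-!
Let `ρ` be a homogeneous basis of the Jacobian syzygies of `f`. No prime divides all partial
derivatives of a squarefree `f`, so the maximal minors of `ρ` form a multiple `h ∇f` of the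
gradient. If a prime `p` divided `h`, the rows of `ρ` would become dependent modulo `p`; since a
vector `a` with `p a` a syzygy is a syzygy itself, this would contradict that `ρ` is a basis. So `h`
is a unit (Hilbert–Burch), and comparing degrees gives `∑ e k = d - 1 =: s`. Then
`0 → ⨁ S(-s - e k) → S(-s)⁴ → S → M(f) → 0` is exact, so `m(f)_k` is an alternating sum of
binomial coefficients, which for large `k` are polynomials in `k`.
-/

section HilbertBurch

variable {R : Type*} [CommRing R] {n : ℕ}

/-- The maximal minor of an `n × (n + 1)` matrix omitting column `i`, with the sign of its cofactor
when a row is added on top. -/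
def signedMinor (ρ : Fin n → Fin (n + 1) → R) (i : Fin (n + 1)) : R :=
  (-1) ^ (i : ℕ) * (of fun k l => ρ k (i.succAbove l)).det

lemma det_vecCons_eq_sum_signedMinor (x : Fin (n + 1) → R) (ρ : Fin n → Fin (n + 1) → R) :
    (of (vecCons x ρ)).det = ∑ i, x i * signedMinor ρ i := by
  rw [det_succ_row_zero]
  refine Finset.sum_congr rfl fun i _ => ?_
  rw [signedMinor, mul_left_comm, ← mul_assoc]
  rfl

lemma map_signedMinor {R' : Type*} [CommRing R'] (φ : R →+* R') (ρ : Fin n → Fin (n + 1) → R)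
    (i : Fin (n + 1)) : φ (signedMinor ρ i) = signedMinor (fun k l => φ (ρ k l)) i := by
  simp only [signedMinor, map_mul, map_pow, map_neg, map_one, RingHom.map_det]
  rfl

/-- The module of syzygies (relations) of a family `g`; for the partial derivatives of `f` it is
the module `AR(f)`. -/
def syzygyModule {ι : Type*} [Fintype ι] (g : ι → R) : Submodule R (ι → R) :=
  LinearMap.ker (Fintype.linearCombination R g)

lemma mem_syzygyModule_of_smul_mem [IsDomain R] {ι : Type*} [Fintype ι] {g a : ι → R} {c : R}
    (hc : c ≠ 0) (h : c • a ∈ syzygyModule g) : a ∈ syzygyModule g := by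
  rw [syzygyModule, LinearMap.mem_ker, map_smul, smul_eq_zero] at h
  exact h.resolve_left hc

lemma exists_signedMinor_ne_zero [IsDomain R] {ρ : Fin n → Fin (n + 1) → R}
    (hρ : LinearIndependent R ρ) : ∃ i, signedMinor ρ i ≠ 0 := by
  obtain ⟨x, hx⟩ := exists_linearIndependent_cons_of_lt_finrank hρ (by simp)
  have hdet : (of (vecCons x ρ)).det ≠ 0 :=
    nonsingular_iff_det_ne_zero.mp (Nonsingular.of_linearIndependent_row hx)
  rw [det_vecCons_eq_sum_signedMinor] at hdet
  obtain ⟨i, -, hi⟩ := Finset.exists_ne_zero_of_sum_ne_zero hdet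
  exact ⟨i, right_ne_zero_of_mul hi⟩

lemma mul_signedMinor_comm [IsDomain R] {g : Fin (n + 1) → R} {ρ : Fin n → Fin (n + 1) → R}
    (hρ : ∀ k, ρ k ∈ syzygyModule g) (i j : Fin (n + 1)) :
    g i * signedMinor ρ j = g j * signedMinor ρ i := by
  rcases eq_or_ne g 0 with rfl | hg
  · simp
  -- The row `g i eⱼ - g j eᵢ` is a syzygy too: on top of `ρ` it gives a square matrix killing `g`.
  let x : Fin (n + 1) → R := Pi.single j (g i) - Pi.single i (g j)
  have hx : x ⬝ᵥ g = 0 := by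
    simp [x, sub_dotProduct, mul_comm]
  have hker : of (vecCons x ρ) *ᵥ g = 0 := by
    funext k
    refine Fin.cases hx (fun k => ?_) k
    exact hρ k
  have hdet := exists_mulVec_eq_zero_iff.mp ⟨g, hg, hker⟩
  rw [det_vecCons_eq_sum_signedMinor] at hdet
  simpa [x, sub_mul, Pi.single_apply, Finset.sum_sub_distrib, sub_eq_zero] using hdet

lemma dvd_of_forall_dvd_mul [IsDomain R] [UniqueFactorizationMonoid R] {ι : Type*} {g : ι → R}
    (hprim : ∀ p, Prime p → ∃ i, ¬ p ∣ g i) {a : R} (ha : a ≠ 0) {m : R}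
    (h : ∀ i, a ∣ g i * m) : a ∣ m := by
  induction a using UniqueFactorizationMonoid.induction_on_prime generalizing m with
  | h₁ => exact absurd rfl ha
  | h₂ u hu => exact hu.dvd
  | h₃ a p ha0 hp ih =>
    obtain ⟨i, hi⟩ := hprim p hp
    obtain ⟨m, rfl⟩ := (hp.dvd_or_dvd ((dvd_mul_right p a).trans (h i))).resolve_left hi
    refine mul_dvd_mul_left p (ih ha0 fun j => ?_)
    rw [← mul_dvd_mul_iff_left hp.ne_zero, mul_left_comm]
    exact h j

lemma exists_signedMinor_eq_mul [IsDomain R] [UniqueFactorizationMonoid R]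
    {g : Fin (n + 1) → R} (hg : g ≠ 0) (hprim : ∀ p, Prime p → ∃ i, ¬ p ∣ g i)
    {ρ : Fin n → Fin (n + 1) → R} (hρ : ∀ k, ρ k ∈ syzygyModule g) :
    ∃ h, ∀ i, signedMinor ρ i = h * g i := by
  obtain ⟨j, hj⟩ := Function.ne_iff.mp hg
  obtain ⟨h, hh⟩ : g j ∣ signedMinor ρ j :=
    dvd_of_forall_dvd_mul hprim hj fun i =>
      mul_signedMinor_comm hρ i j ▸ dvd_mul_right (g j) _
  refine ⟨h, fun i => mul_left_cancel₀ hj ?_⟩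
  rw [mul_signedMinor_comm hρ j i, hh]
  ring

lemma linearIndependent_mk_span_singleton {κ ι : Type*} [Finite κ]
    {ρ : κ → ι → R} (hli : LinearIndependent R ρ) {p : R}
    (hsat : ∀ a, p • a ∈ Submodule.span R (Set.range ρ) → a ∈ Submodule.span R (Set.range ρ)) :
    LinearIndependent (R ⧸ Ideal.span {p})
      fun k i => Ideal.Quotient.mk (Ideal.span {p}) (ρ k i) := by
  have := Fintype.ofFinite κ
  rw [Fintype.linearIndependent_iff]
  intro c hc
  obtain ⟨a, rfl⟩ := Ideal.Quotient.mk_surjective.comp_left c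
  have hdvd (i) : p ∣ ∑ k, a k * ρ k i := by
    rw [← Ideal.mem_span_singleton, ← Ideal.Quotient.eq_zero_iff_mem, map_sum]
    simpa using congrFun hc i
  choose b hb using hdvd
  have hpb : p • b = ∑ k, a k • ρ k := by
    funext i
    simp [← hb i]
  obtain ⟨c, rfl⟩ := (Submodule.mem_span_range_iff_exists_fun R).mp <| hsat b <| by
    rw [hpb, Submodule.mem_span_range_iff_exists_fun]
    exact ⟨a, rfl⟩
  have hzero : ∑ k, (a k - p * c k) • ρ k = 0 := by
    simp only [sub_smul, Finset.sum_sub_distrib, ← hpb, mul_smul, Finset.smul_sum, sub_self]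
  intro k
  change Ideal.Quotient.mk _ (a k) = 0
  rw [Ideal.Quotient.eq_zero_iff_mem, Ideal.mem_span_singleton]
  exact ⟨c k, sub_eq_zero.mp (Fintype.linearIndependent_iff.mp hli _ hzero k)⟩

theorem exists_isUnit_signedMinor_eq_mul [IsDomain R] [UniqueFactorizationMonoid R]
    {g : Fin (n + 1) → R} (hg : g ≠ 0) (hprim : ∀ p, Prime p → ∃ i, ¬ p ∣ g i)
    {ρ : Fin n → Fin (n + 1) → R} (hli : LinearIndependent R ρ)
    (hspan : Submodule.span R (Set.range ρ) = syzygyModule g) :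
    ∃ u, IsUnit u ∧ ∀ i, signedMinor ρ i = u * g i := by
  obtain ⟨u, hu⟩ := exists_signedMinor_eq_mul hg hprim (ρ := ρ) fun k =>
    hspan ▸ Submodule.subset_span ⟨k, rfl⟩
  obtain ⟨j, hj⟩ := exists_signedMinor_ne_zero hli
  have hu0 : u ≠ 0 := left_ne_zero_of_mul (hu j ▸ hj)
  refine ⟨u, ?_, hu⟩
  by_contra hunit
  obtain ⟨p, hp, hpu⟩ := WfDvdMonoid.exists_irreducible_factor hunit hu0
  have : (Ideal.span {p}).IsPrime := (Ideal.span_singleton_prime hp.ne_zero).mpr hp.prime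
  have hmod := linearIndependent_mk_span_singleton hli fun a ha => by
    rw [hspan] at ha ⊢
    exact mem_syzygyModule_of_smul_mem hp.ne_zero ha
  obtain ⟨i, hi⟩ := exists_signedMinor_ne_zero hmod
  rw [← map_signedMinor, Ne, Ideal.Quotient.eq_zero_iff_mem, Ideal.mem_span_singleton, hu i] at hi
  exact hi (hpu.mul_right _)

end HilbertBurch

section Gradient

variable {σ K : Type*} [Field K]

lemma totalDegree_pderiv_lt {R : Type*} [CommSemiring R] {p : MvPolynomial σ R} {i : σ}
    (h : pderiv i p ≠ 0) : (pderiv i p).totalDegree < p.totalDegree := by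
  have hsupp : ∀ m ∈ (pderiv i p).support, (m.sum fun _ e => e) < p.totalDegree := by
    intro m hm
    rw [mem_support_iff, coeff_pderiv] at hm
    have hle := le_totalDegree (mem_support_iff.mpr (left_ne_zero_of_mul hm))
    rw [Finsupp.sum_add_index' (fun _ => rfl) (fun _ _ _ => rfl), Finsupp.sum_single_index rfl]
      at hle
    exact hle
  obtain ⟨m, hm⟩ := support_nonempty.mpr h
  exact (Finset.sup_lt_iff ((Nat.zero_le _).trans_lt (hsupp m hm))).mpr hsupp

lemma eq_C_of_pderiv_eq_zero {R : Type*} [CommSemiring R] [NoZeroDivisors R] [CharZero R]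
    {p : MvPolynomial σ R} (h : ∀ i, pderiv i p = 0) : p = C (coeff 0 p) := by
  classical
  ext m
  rw [coeff_C]
  split_ifs with hm
  · rw [hm]
  obtain ⟨i, hi⟩ := Finsupp.ne_iff.mp (Ne.symm hm)
  have hcoeff := coeff_pderiv (i := i) p (m - Finsupp.single i 1)
  rw [h i, coeff_zero, tsub_add_cancel_of_le (by simpa [Nat.one_le_iff_ne_zero] using hi)] at hcoeff
  exact (mul_eq_zero.mp hcoeff.symm).resolve_right (Nat.cast_add_one_ne_zero _)

lemma exists_not_dvd_pderiv_of_irreducible [CharZero K] {p : MvPolynomial σ K}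
    (hp : Irreducible p) : ∃ i, ¬ p ∣ pderiv i p := by
  by_contra! hdvd
  have hzero (i) : pderiv i p = 0 := by
    by_contra hi
    exact (totalDegree_pderiv_lt hi).not_ge (totalDegree_le_of_dvd_of_isDomain (hdvd i) hi)
  have hp' := eq_C_of_pderiv_eq_zero hzero
  refine hp.not_isUnit (hp' ▸ IsUnit.map C (isUnit_iff_ne_zero.mpr fun hc => hp.ne_zero ?_))
  rw [hp', hc, C_0]

variable [Finite σ] [CharZero K] {f : MvPolynomial σ K} {d : ℕ}

lemma dvd_of_forall_dvd_pderiv (hd : d ≠ 0) (hf : f.IsHomogeneous d) {p : MvPolynomial σ K}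
    (h : ∀ i, p ∣ pderiv i f) : p ∣ f := by
  have := Fintype.ofFinite σ
  have hdvd : p ∣ (d : K) • f := by
    rw [Nat.cast_smul_eq_nsmul, ← hf.sum_X_mul_pderiv]
    exact Finset.dvd_sum fun i _ => (h i).mul_left _
  rw [smul_eq_C_mul] at hdvd
  exact ((isUnit_iff_ne_zero.mpr (Nat.cast_ne_zero.mpr hd)).map C).dvd_mul_left.mp hdvd

lemma exists_not_dvd_pderiv_of_squarefree (hd : d ≠ 0) (hf : f.IsHomogeneous d)
    (hred : Squarefree f) {p : MvPolynomial σ K} (hp : Prime p) : ∃ i, ¬ p ∣ pderiv i f := by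
  by_contra! hdvd
  obtain ⟨g, rfl⟩ := dvd_of_forall_dvd_pderiv hd hf hdvd
  obtain ⟨i, hi⟩ := exists_not_dvd_pderiv_of_irreducible hp.irreducible
  have hmul := hdvd i
  rw [pderiv_mul, dvd_add_left (dvd_mul_right p _)] at hmul
  have hpg := (hp.dvd_or_dvd hmul).resolve_left hi
  exact hp.not_isUnit (hred p (mul_dvd_mul_left p hpg))

lemma gradient_ne_zero (hd : d ≠ 0) (hf : f.IsHomogeneous d) (hf0 : f ≠ 0) :
    (fun i => pderiv i f) ≠ 0 := fun h =>
  hf0 <| zero_dvd_iff.mp <| dvd_of_forall_dvd_pderiv hd hf fun i => by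
    rw [show pderiv i f = 0 from congrFun h i]

end Gradient

section Homogeneous

variable {σ R : Type*} [CommRing R]

lemma isHomogeneous_det {m : Type*} [Fintype m] [DecidableEq m]
    {M : Matrix m m (MvPolynomial σ R)} {e : m → ℕ} (h : ∀ i j, (M i j).IsHomogeneous (e i)) :
    M.det.IsHomogeneous (∑ i, e i) := by
  rw [← det_transpose, det_apply']
  refine IsHomogeneous.sum _ _ _ fun τ _ => ?_
  rw [← map_intCast (C : R →+* MvPolynomial σ R)]
  exact (IsHomogeneous.prod _ _ _ fun i _ => h i (τ i)).C_mul _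

lemma isHomogeneous_signedMinor {n : ℕ} {ρ : Fin n → Fin (n + 1) → MvPolynomial σ R}
    {e : Fin n → ℕ}
    (h : ∀ k i, (ρ k i).IsHomogeneous (e k)) (i : Fin (n + 1)) :
    (signedMinor ρ i).IsHomogeneous (∑ k, e k) := by
  have hsign : ((-1) ^ (i : ℕ) : MvPolynomial σ R) = C ((-1) ^ (i : ℕ)) := by simp
  rw [signedMinor, hsign]
  exact (isHomogeneous_det fun k l => h k _).C_mul _

/-- `ρ` is a basis of the module of vectors `N` consisting of vectors `ρ k` homogeneous of degree
`e k`: the freeness of a graded module of syzygies, with exponents `e`. -/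
structure IsHomogeneousBasis {κ ι : Type*}
    (N : Submodule (MvPolynomial σ R) (ι → MvPolynomial σ R)) (e : κ → ℕ)
    (ρ : κ → ι → MvPolynomial σ R) : Prop where
  isHomogeneous : ∀ k i, (ρ k i).IsHomogeneous (e k)
  linearIndependent : LinearIndependent (MvPolynomial σ R) ρ
  span_eq : Submodule.span (MvPolynomial σ R) (Set.range ρ) = N

theorem sum_exponents_add_one_eq {K : Type*} [Field K] [CharZero K] {n d : ℕ}
    {f : MvPolynomial (Fin (n + 1)) K} (hd : d ≠ 0) (hf : f.IsHomogeneous d) (hred : Squarefree f)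
    {e : Fin n → ℕ} {ρ : Fin n → Fin (n + 1) → MvPolynomial (Fin (n + 1)) K}
    (hρ : IsHomogeneousBasis (syzygyModule fun i => pderiv i f) e ρ) :
    ∑ k, e k + 1 = d := by
  obtain ⟨u, hu, hminor⟩ := exists_isUnit_signedMinor_eq_mul
    (gradient_ne_zero hd hf hred.ne_zero)
    (fun _ hp => exists_not_dvd_pderiv_of_squarefree hd hf hred hp)
    hρ.linearIndependent hρ.span_eq
  obtain ⟨c, -, rfl⟩ := isUnit_iff_eq_C_of_isReduced.mp hu
  obtain ⟨i, hi⟩ := exists_signedMinor_ne_zero hρ.linearIndependent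
  have hdeg : (signedMinor ρ i).IsHomogeneous (d - 1) :=
    hminor i ▸ hf.pderiv.C_mul c
  have := (isHomogeneous_signedMinor hρ.isHomogeneous i).inj_right hdeg hi
  omega

end Homogeneous

section HilbertFunction

variable {σ R : Type*} [CommRing R]

lemma finite_homogeneousSubmodule [Finite σ] (k : ℕ) :
    Module.Finite R (homogeneousSubmodule σ R k) :=
  Module.Finite.iff_fg.mpr (homogeneousSubmodule_fg σ R k)

lemma free_homogeneousSubmodule (k : ℕ) : Module.Free R (homogeneousSubmodule σ R k) := by
  rw [homogeneousSubmodule_eq_finsupp_supported]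
  exact Module.Free.of_equiv (AddMonoidAlgebra.supportedEquivFinsupp _).symm

lemma finrank_homogeneousSubmodule [Nontrivial R] [Fintype σ] (k : ℕ) :
    Module.finrank R (homogeneousSubmodule σ R k) = (Fintype.card σ).multichoose k := by
  classical
  have hs : {m : σ →₀ ℕ | m.degree = k} =
      ((Finset.univ : Finset σ).finsuppAntidiag k : Set (σ →₀ ℕ)) := by
    ext m
    simp [Finset.mem_finsuppAntidiag, Finsupp.degree_eq_sum]
  rw [homogeneousSubmodule_eq_finsupp_supported, hs,
    (AddMonoidAlgebra.supportedEquivFinsupp _).finrank_eq, Module.finrank_finsupp_self]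
  simp only [Finset.coe_sort_coe, Fintype.card_coe,
    Finset.card_finsuppAntidiag_nat_eq_multichoose, Finset.card_univ]

/-- A product of submodules, taken inside the product module, is the product of these modules. -/
def submodulePiEquiv {ι : Type*} {M : ι → Type*} [∀ i, AddCommMonoid (M i)]
    [∀ i, Module R (M i)] (p : ∀ i, Submodule R (M i)) :
    Submodule.pi Set.univ p ≃ₗ[R] (∀ i, p i) where
  toFun a i := ⟨a.1 i, a.2 i trivial⟩
  invFun a := ⟨fun i => a i, fun i _ => (a i).2⟩
  map_add' _ _ := rfl
  map_smul' _ _ := rfl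

variable (σ R) in
/-- The families of polynomials whose `i`-th member is homogeneous of degree `m i`, that is, the
degree `q` part of the graded module `⨁ S(-e i)` when `m i = q - e i`. -/
def homogeneousPi {ι : Type*} (m : ι → ℕ) :
    Submodule R (ι → MvPolynomial σ R) :=
  Submodule.pi Set.univ fun i => homogeneousSubmodule σ R (m i)

lemma mem_homogeneousPi {ι : Type*} {m : ι → ℕ} {a : ι → MvPolynomial σ R} :
    a ∈ homogeneousPi σ R m ↔ ∀ i, (a i).IsHomogeneous (m i) := by
  simp [homogeneousPi, Submodule.mem_pi]

lemma finite_homogeneousPi [Finite σ] {ι : Type*} [Finite ι] (m : ι → ℕ) :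
    Module.Finite R (homogeneousPi σ R m) :=
  have := fun i => finite_homogeneousSubmodule (σ := σ) (R := R) (m i)
  Module.Finite.equiv (submodulePiEquiv _).symm

lemma finrank_homogeneousPi [Nontrivial R] [Fintype σ] {ι : Type*} [Fintype ι] (m : ι → ℕ) :
    Module.finrank R (homogeneousPi σ R m) = ∑ i, (Fintype.card σ).multichoose (m i) := by
  have := fun i => finite_homogeneousSubmodule (σ := σ) (R := R) (m i)
  have := fun i => free_homogeneousSubmodule (σ := σ) (R := R) (m i)
  rw [homogeneousPi, (submodulePiEquiv _).finrank_eq, Module.finrank_pi_fintype]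
  simp only [finrank_homogeneousSubmodule]

lemma homogeneousComponent_mul_of_isHomogeneous {a g : MvPolynomial σ R} {e m k : ℕ}
    (hg : g.IsHomogeneous e) (hk : m + e = k) :
    homogeneousComponent k (a * g) = homogeneousComponent m a * g := by
  let _ : GradedAlgebra (homogeneousSubmodule σ R) := gradedAlgebra
  have hdec (φ : MvPolynomial σ R) (i : ℕ) :
      (DirectSum.decompose (homogeneousSubmodule σ R) φ i : MvPolynomial σ R) =
        homogeneousComponent i φ := decomposition.decompose'_apply φ i
  rw [← hk, ← hdec, ← hdec]
  exact DirectSum.coe_decompose_mul_add_of_right_mem (homogeneousSubmodule σ R) hg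

/-- The map `a ↦ ∑ j, a j • v j`, linear over the coefficients only, so that it can be restricted to
graded pieces. -/
def combinationMap {κ M : Type*} [Fintype κ] [AddCommGroup M] [Module (MvPolynomial σ R) M]
    [Module R M] [IsScalarTower R (MvPolynomial σ R) M] (v : κ → M) :
    (κ → MvPolynomial σ R) →ₗ[R] M :=
  (Fintype.linearCombination (MvPolynomial σ R) v).restrictScalars R

lemma map_combinationMap_homogeneousPi {κ M : Type*} [Fintype κ] [AddCommGroup M]
    [Module (MvPolynomial σ R) M] [Module R M] [IsScalarTower R (MvPolynomial σ R) M]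
    {v : κ → M} {m : κ → ℕ} {P : Submodule R M} {π : M →ₗ[R] M}
    (hP : ∀ j (a : MvPolynomial σ R), a.IsHomogeneous (m j) → a • v j ∈ P)
    (hπP : ∀ x ∈ P, π x = x)
    (hπ : ∀ j (a : MvPolynomial σ R), π (a • v j) = homogeneousComponent (m j) a • v j) :
    (homogeneousPi σ R m).map (combinationMap v) =
      P ⊓ (Submodule.span (MvPolynomial σ R) (Set.range v)).restrictScalars R := by
  ext x
  simp only [Submodule.mem_map, mem_homogeneousPi, Submodule.mem_inf,
    Submodule.restrictScalars_mem, Submodule.mem_span_range_iff_exists_fun]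
  constructor
  · rintro ⟨a, ha, rfl⟩
    exact ⟨Submodule.sum_mem _ fun j _ => hP j _ (ha j), a, rfl⟩
  · rintro ⟨hx, a, rfl⟩
    refine ⟨fun j => homogeneousComponent (m j) (a j),
      fun j => homogeneousComponent_isHomogeneous _ _, ?_⟩
    rw [← hπP _ hx, map_sum]
    exact Finset.sum_congr rfl fun j _ => (hπ j (a j)).symm

lemma map_combinationMap_eq_homogeneousSubmodule_inf_span {ι : Type*} [Fintype ι]
    {g : ι → MvPolynomial σ R} {q s : ℕ} (hg : ∀ i, (g i).IsHomogeneous s) :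
    (homogeneousPi σ R fun _ : ι => q).map (combinationMap g) =
      homogeneousSubmodule σ R (q + s) ⊓ (Ideal.span (Set.range g)).restrictScalars R :=
  map_combinationMap_homogeneousPi (π := homogeneousComponent (q + s))
    (fun i _ ha => ha.mul (hg i)) (fun _ hx => homogeneousComponent_eq_self hx)
    fun i _ => homogeneousComponent_mul_of_isHomogeneous (hg i) rfl

lemma map_combinationMap_eq_homogeneousPi_inf_span {ι κ : Type*} [Fintype κ]
    {ρ : κ → ι → MvPolynomial σ R} {e m : κ → ℕ} {q : ℕ} (hρ : ∀ k i, (ρ k i).IsHomogeneous (e k))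
    (hm : ∀ k, m k + e k = q) :
    (homogeneousPi σ R m).map (combinationMap ρ) =
      homogeneousPi σ R (fun _ => q) ⊓
        (Submodule.span (MvPolynomial σ R) (Set.range ρ)).restrictScalars R :=
  map_combinationMap_homogeneousPi (π := (homogeneousComponent q).compLeft ι)
    (fun k _ ha => mem_homogeneousPi.mpr fun i => hm k ▸ ha.mul (hρ k i))
    (fun _ hx => funext fun i => homogeneousComponent_eq_self (mem_homogeneousPi.mp hx i))
    fun k _ => funext fun i => homogeneousComponent_mul_of_isHomogeneous (hρ k i) (hm k)

/-- The Hilbert function of the quotient ring by `I`: its degree `k` part is encoded as the image of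
the homogeneous polynomials of degree `k`. -/
def hilbertFunction (I : Ideal (MvPolynomial σ R)) (k : ℕ) : ℕ :=
  Module.finrank R ((homogeneousSubmodule σ R k).map (Submodule.mkQ (I.restrictScalars R)))

end HilbertFunction

section HilbertPolynomial

variable {σ K : Type*} [Field K]

lemma finrank_map_add_finrank_inf_ker {V W : Type*} [AddCommGroup V] [Module K V]
    [AddCommGroup W] [Module K W] (T : V →ₗ[K] W) (p : Submodule K V) [Module.Finite K p] :
    Module.finrank K (p.map T) + Module.finrank K ↥(p ⊓ LinearMap.ker T) = Module.finrank K p := by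
  have := (T.domRestrict p).finrank_range_add_finrank_ker
  rwa [LinearMap.range_domRestrict, LinearMap.ker_domRestrict,
    ← Submodule.finrank_map_subtype_eq, Submodule.map_comap_subtype] at this

theorem hilbertFunction_span_add [Fintype σ] {ι κ : Type*} [Fintype ι] [Fintype κ]
    {g : ι → MvPolynomial σ K} {s : ℕ} (hg : ∀ i, (g i).IsHomogeneous s)
    {ρ : κ → ι → MvPolynomial σ K} {e : κ → ℕ} (hρ : IsHomogeneousBasis (syzygyModule g) e ρ)
    {q : ℕ} {m : κ → ℕ} (hm : ∀ k, m k + e k = q) :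
    hilbertFunction (Ideal.span (Set.range g)) (q + s) +
        Fintype.card ι * (Fintype.card σ).multichoose q =
      (Fintype.card σ).multichoose (q + s) + ∑ k, (Fintype.card σ).multichoose (m k) := by
  have := finite_homogeneousSubmodule (σ := σ) (R := K) (q + s)
  have := finite_homogeneousPi (σ := σ) (R := K) fun _ : ι => q
  have hquot := finrank_map_add_finrank_inf_ker
    (Submodule.mkQ ((Ideal.span (Set.range g)).restrictScalars K))
    (homogeneousSubmodule σ K (q + s))
  have hgen := finrank_map_add_finrank_inf_ker (combinationMap g) (homogeneousPi σ K fun _ : ι => q)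
  have hker : LinearMap.ker (combinationMap g) = (syzygyModule g).restrictScalars K := rfl
  have hinj : Function.Injective (combinationMap ρ) :=
    linearIndependent_iff_injective_fintypeLinearCombination.mp hρ.linearIndependent
  have hsyz := ((homogeneousPi σ K m).equivMapOfInjective _ hinj).finrank_eq
  rw [map_combinationMap_eq_homogeneousPi_inf_span hρ.isHomogeneous hm, hρ.span_eq] at hsyz
  rw [Submodule.ker_mkQ] at hquot
  rw [map_combinationMap_eq_homogeneousSubmodule_inf_span hg, hker, ← hsyz] at hgen
  simp only [finrank_homogeneousSubmodule, finrank_homogeneousPi, Finset.sum_const,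
    Finset.card_univ, smul_eq_mul] at hquot hgen
  rw [hilbertFunction]
  omega

lemma cast_multichoose_four (m : ℕ) :
    (Nat.multichoose 4 m : ℚ) = (m + 1) * (m + 2) * (m + 3) / 6 := by
  rw [Nat.multichoose_eq, show 4 + m - 1 = m + 3 by omega, Nat.cast_add_choose]
  simp only [Nat.factorial_succ, Nat.cast_mul, Nat.cast_add, Nat.cast_ofNat, Nat.cast_one,
    Nat.reduceAdd, zero_add, Nat.factorial_zero, mul_one, Nat.reduceMul]
  field_simp
  ring

theorem hilbertFunction_span_eq_freeHilb {g : Fin 4 → MvPolynomial (Fin 4) K} {e : Fin 3 → ℕ}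
    (hg : ∀ i, (g i).IsHomogeneous (∑ j, e j))
    {ρ : Fin 3 → Fin 4 → MvPolynomial (Fin 4) K} (hρ : IsHomogeneousBasis (syzygyModule g) e ρ)
    {k : ℕ} (hk : ∀ j, ∑ i, e i + e j ≤ k) :
    (hilbertFunction (Ideal.span (Set.range g)) k : ℚ) =
      freeHilbA (e 0) (e 1) (e 2) * k + freeHilbB (e 0) (e 1) (e 2) := by
  obtain ⟨q, rfl⟩ := Nat.exists_eq_add_of_le' ((Nat.le_add_right _ _).trans (hk 0))
  have hq (j) : q - e j + e j = q := Nat.sub_add_cancel (by have := hk j; omega)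
  have hdim := congrArg (Nat.cast (R := ℚ)) (hilbertFunction_span_add hg hρ hq)
  have hcast (j) : ((q - e j : ℕ) : ℚ) = q - e j := eq_sub_of_add_eq (mod_cast hq j)
  simp only [Fintype.card_fin, Nat.cast_add, Nat.cast_mul, Nat.cast_ofNat, Fin.sum_univ_three,
    cast_multichoose_four, hcast] at hdim ⊢
  simp only [freeHilbA, freeHilbB]
  linear_combination hdim

end HilbertPolynomial

theorem free_hilbert_polynomial_general {K : Type*} [Field K] [CharZero K]
    {f : MvPolynomial (Fin 4) K} {d : ℕ} (hd : d ≠ 0) (hf : f.IsHomogeneous d)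
    (hred : Squarefree f) {e : Fin 3 → ℕ} {ρ : Fin 3 → Fin 4 → MvPolynomial (Fin 4) K}
    (hρ : IsHomogeneousBasis (syzygyModule fun i => pderiv i f) e ρ) :
    ∑ j, e j + 1 = d ∧
    ∃ N : ℕ, ∀ k : ℕ, N ≤ k →
      (hilbertFunction (Ideal.span (Set.range fun i => pderiv i f)) k : ℚ) =
        freeHilbA (e 0) (e 1) (e 2) * k + freeHilbB (e 0) (e 1) (e 2) := by
  have hsum := sum_exponents_add_one_eq hd hf hred hρ
  have hpderiv (i : Fin 4) : (pderiv i f).IsHomogeneous (∑ j, e j) := by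
    rw [Nat.eq_sub_of_add_eq hsum]
    exact hf.pderiv
  refine ⟨hsum, ∑ j, e j + ∑ j, e j, fun k hk =>
    hilbertFunction_span_eq_freeHilb hpderiv hρ fun j => le_trans ?_ hk⟩
  gcongr
  exact Finset.single_le_sum_of_canonicallyOrdered (Finset.mem_univ j)

lemma IsFreeWith.exists_isHomogeneousBasis {f : S4} {d1 d2 d3 : ℕ} (h : IsFreeWith f d1 d2 d3) :
    ∃ ρ, IsHomogeneousBasis (syzygyModule fun i => pderiv i f) ![d1, d2, d3] ρ := by
  obtain ⟨-, -, ρ1, ρ2, ρ3, h1, h2, h3, hom1, hom2, hom3, hgen, hind⟩ := h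
  refine ⟨![ρ1, ρ2, ρ3], Fin.forall_fin_succ.mpr ⟨hom1, Fin.forall_fin_two.mpr ⟨hom2, hom3⟩⟩,
    Fintype.linearIndependent_iff.mpr fun a ha => ?_, le_antisymm ?_ fun a ha => ?_⟩
  · rw [Fin.sum_univ_three] at ha
    obtain ⟨h0, h1, h2⟩ := hind _ _ _ ha
    exact Fin.forall_fin_succ.mpr ⟨h0, Fin.forall_fin_two.mpr ⟨h1, h2⟩⟩
  · rw [Submodule.span_le, Set.range_subset_iff]
    exact Fin.forall_fin_succ.mpr ⟨h1, Fin.forall_fin_two.mpr ⟨h2, h3⟩⟩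
  · obtain ⟨a, b, c, rfl⟩ := hgen a ha
    rw [Submodule.mem_span_range_iff_exists_fun]
    exact ⟨![a, b, c], Fin.sum_univ_three _⟩

/-- **Formula (2.2).** For a free surface with exponents `d1 ≤ d2 ≤ d3` which is not a cone,
one has `d1 + d2 + d3 = d - 1` and the Hilbert polynomial of the Milnor algebra is
`a·k + b` with `a = s₁² - s₂` and `b = 2a - s₁³ + (3/2)s₁s₂ - (1/2)s₃`. -/
theorem free_hilbert_polynomial (f : S4) (d d1 d2 d3 : ℕ)
    (hd : 1 ≤ d) (hf : f.IsHomogeneous d) (hred : Squarefree f)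
    (hfree : IsFreeWith f d1 d2 d3)
    (hnocone : ∀ ρ ∈ AR4 f, VecHomog ρ 0 → ρ = 0) :
    d1 + d2 + d3 + 1 = d ∧
    ∃ N : ℕ, ∀ k : ℕ, N ≤ k →
      (milnor4 f k : ℚ) =
        freeHilbA d1 d2 d3 * k + freeHilbB d1 d2 d3 := by
  obtain ⟨ρ, hρ⟩ := hfree.exists_isHomogeneousBasis
  obtain ⟨hsum, hpoly⟩ :=
    free_hilbert_polynomial_general (Nat.one_le_iff_ne_zero.mp hd) hf hred hρ
  exact ⟨by simpa [Fin.sum_univ_three] using hsum, hpoly⟩
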